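/- Shortcut formula for leave-subject-out cross-validation: if I_{ii} − A_{ii} is invertible for every i, then LsoCV(W,λ) = (1/n) Σ_{i=1}^n (y_i − ŷ_i)^T (I_{ii} − A_{ii})^{-T} (I_{ii} − A_{ii})^{-1} (y_i − ŷ_i), where ŷ = AY and ŷ_i is its i-th subject block; equivalently, for each i, y_i − X_i β̂^{[-i]} = (I_{ii} − A_{ii})^{-1}(y_i − ŷ_i). -/

import Mathlib

/-!
Write `V = W⁻¹`, `G = Xᵀ V X + ∑ λₖ Sₖ` and `β = β̂^{[-i]}`. Since `W` is block diagonal, so is `V`,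
hence both `Xᵀ V X` and `Xᵀ V Y` are sums over subjects (`gram_eq_sum`, `moment_eq_sum`). Adding the
terms of subject `i` to the normal equations of `β` gives, with `r = y_i − X_i β`,
`G β + X_iᵀ V_i r = Xᵀ V Y`. Applying `X_i G⁻¹` turns this into `X_i β + A_{ii} r = ŷ_i`, that is
`(I_{ii} − A_{ii}) r = y_i − ŷ_i` (`one_sub_diagBlock_mulVec_residual`). Inverting gives the formula
for the residuals, and taking squared norms gives the one for `LsoCV`.
-/

open Matrix
open scoped BigOperators

namespace Lso6

/-- The index set of all observations: subject `i` contributes `d i` observations. -/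
abbrev Idx {n : ℕ} (d : Fin n → ℕ) := (i : Fin n) × Fin (d i)

/-- The `i`-th diagonal block of a matrix indexed by all observations. -/
def diagBlock {n : ℕ} {d : Fin n → ℕ} (A : Matrix (Idx d) (Idx d) ℝ) (i : Fin n) :
    Matrix (Fin (d i)) (Fin (d i)) ℝ :=
  fun j j' => A ⟨i, j⟩ ⟨i, j'⟩

variable {n p m : ℕ} {d : Fin n → ℕ}

/-- the design block of subject `i` -/
def Xb (X : Matrix (Idx d) (Fin p) ℝ) (i : Fin n) : Matrix (Fin (d i)) (Fin p) ℝ :=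
  fun j c => X ⟨i, j⟩ c

/-- the response block of subject `i` -/
def yb (Y : Idx d → ℝ) (i : Fin n) : Fin (d i) → ℝ := fun j => Y ⟨i, j⟩

/-- the hat matrix `A = X (XᵀW⁻¹X + ∑ λₖ Sₖ)⁻¹ Xᵀ W⁻¹` -/
noncomputable def hatA (X : Matrix (Idx d) (Fin p) ℝ)
    (Wb : (i : Fin n) → Matrix (Fin (d i)) (Fin (d i)) ℝ)
    (S : Fin m → Matrix (Fin p) (Fin p) ℝ) (lam : Fin m → ℝ) :
    Matrix (Idx d) (Idx d) ℝ :=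
  X * (Xᵀ * (Matrix.blockDiagonal' Wb)⁻¹ * X + ∑ k, lam k • S k)⁻¹ * Xᵀ *
    (Matrix.blockDiagonal' Wb)⁻¹

/-- the penalized normal-equation matrix when subject `i` is left out -/
noncomputable def Gmin (X : Matrix (Idx d) (Fin p) ℝ)
    (Wb : (i : Fin n) → Matrix (Fin (d i)) (Fin (d i)) ℝ)
    (S : Fin m → Matrix (Fin p) (Fin p) ℝ) (lam : Fin m → ℝ) (i : Fin n) :
    Matrix (Fin p) (Fin p) ℝ :=
  (∑ j ∈ Finset.univ.erase i, (Xb X j)ᵀ * (Wb j)⁻¹ * Xb X j) + ∑ k, lam k • S k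

/-- the leave-subject-`i`-out estimator `β̂^{[-i]}` -/
noncomputable def betaMin (X : Matrix (Idx d) (Fin p) ℝ)
    (Wb : (i : Fin n) → Matrix (Fin (d i)) (Fin (d i)) ℝ)
    (S : Fin m → Matrix (Fin p) (Fin p) ℝ) (lam : Fin m → ℝ) (Y : Idx d → ℝ) (i : Fin n) :
    Fin p → ℝ :=
  (Gmin X Wb S lam i)⁻¹.mulVec
    (∑ j ∈ Finset.univ.erase i, ((Xb X j)ᵀ * (Wb j)⁻¹).mulVec (yb Y j))

end Lso6

open Lso6

namespace Lso6

theorem inv_blockDiagonal' {n : ℕ} {d : Fin n → ℕ}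
    (Wb : (i : Fin n) → Matrix (Fin (d i)) (Fin (d i)) ℝ) (hWb : ∀ i, (Wb i).PosDef) :
    (Matrix.blockDiagonal' Wb)⁻¹ = Matrix.blockDiagonal' fun i => (Wb i)⁻¹ := by
  apply Matrix.inv_eq_right_inv
  rw [← Matrix.blockDiagonal'_mul, ← Matrix.blockDiagonal'_one]
  congr 1
  funext i
  exact Matrix.mul_nonsing_inv _ ((Matrix.isUnit_iff_isUnit_det _).1 (hWb i).isUnit)

theorem mul_blockDiagonal'_apply {n p : ℕ} {d : Fin n → ℕ}
    (X : Matrix (Idx d) (Fin p) ℝ) (V : (i : Fin n) → Matrix (Fin (d i)) (Fin (d i)) ℝ)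
    (c : Fin p) (i : Fin n) (j : Fin (d i)) :
    (Xᵀ * Matrix.blockDiagonal' V) c ⟨i, j⟩ = ((Xb X i)ᵀ * V i) c j := by
  rw [Matrix.mul_apply, Matrix.mul_apply, Fintype.sum_sigma, Finset.sum_eq_single i]
  · simp [Xb]
  · intro k _ hk
    simp [Matrix.blockDiagonal'_apply_ne _ _ _ hk]
  · simp

theorem gram_eq_sum {n p : ℕ} {d : Fin n → ℕ}
    (X : Matrix (Idx d) (Fin p) ℝ) (V : (i : Fin n) → Matrix (Fin (d i)) (Fin (d i)) ℝ) :
    Xᵀ * Matrix.blockDiagonal' V * X = ∑ j, (Xb X j)ᵀ * V j * Xb X j := by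
  ext a b
  rw [Matrix.mul_apply, Fintype.sum_sigma, Matrix.sum_apply]
  simp only [mul_blockDiagonal'_apply]
  rfl

theorem moment_eq_sum {n p : ℕ} {d : Fin n → ℕ}
    (X : Matrix (Idx d) (Fin p) ℝ) (V : (i : Fin n) → Matrix (Fin (d i)) (Fin (d i)) ℝ)
    (Y : Idx d → ℝ) :
    (Xᵀ * Matrix.blockDiagonal' V) *ᵥ Y = ∑ j, ((Xb X j)ᵀ * V j) *ᵥ yb Y j := by
  ext a
  rw [Matrix.mulVec, dotProduct, Fintype.sum_sigma, Finset.sum_apply]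
  simp only [mul_blockDiagonal'_apply]
  rfl

/-- With `H = G⁻¹` and `V = W⁻¹` this is `A_{ii} = X_i G⁻¹ X_iᵀ W_i⁻¹`. -/
theorem diagBlock_mul {n p : ℕ} {d : Fin n → ℕ}
    (X : Matrix (Idx d) (Fin p) ℝ) (H : Matrix (Fin p) (Fin p) ℝ)
    (V : (i : Fin n) → Matrix (Fin (d i)) (Fin (d i)) ℝ) (i : Fin n) :
    diagBlock (X * H * (Xᵀ * Matrix.blockDiagonal' V)) i =
      Xb X i * H * ((Xb X i)ᵀ * V i) := by
  ext j k
  rw [diagBlock, Matrix.mul_apply, Matrix.mul_apply]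
  simp only [mul_blockDiagonal'_apply]
  rfl

/-- The residual `r = y_i − X_i β̂^{[-i]}` solves `(I_{ii} − A_{ii}) r = y_i − ŷ_i`. -/
theorem one_sub_diagBlock_mulVec_residual {n p m : ℕ} {d : Fin n → ℕ}
    (X : Matrix (Idx d) (Fin p) ℝ)
    (Wb : (i : Fin n) → Matrix (Fin (d i)) (Fin (d i)) ℝ) (hWb : ∀ i, (Wb i).PosDef)
    (S : Fin m → Matrix (Fin p) (Fin p) ℝ) (lam : Fin m → ℝ) (Y : Idx d → ℝ)
    (hG : IsUnit (Xᵀ * (Matrix.blockDiagonal' Wb)⁻¹ * X + ∑ k, lam k • S k).det)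
    (i : Fin n) (hGmin : IsUnit (Gmin X Wb S lam i).det) :
    (1 - diagBlock (hatA X Wb S lam) i) *ᵥ (yb Y i - Xb X i *ᵥ betaMin X Wb S lam Y i) =
      yb Y i - yb (hatA X Wb S lam *ᵥ Y) i := by
  rw [hatA]
  rw [inv_blockDiagonal' Wb hWb] at hG ⊢
  set V : (i : Fin n) → Matrix (Fin (d i)) (Fin (d i)) ℝ := fun i => (Wb i)⁻¹ with hV
  set G := Xᵀ * Matrix.blockDiagonal' V * X + ∑ k, lam k • S k with hGdef
  set β := betaMin X Wb S lam Y i with hβ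
  have hsplit : G = Gmin X Wb S lam i + (Xb X i)ᵀ * V i * Xb X i := by
    rw [hGdef, gram_eq_sum, ← Finset.sum_erase_add _ _ (Finset.mem_univ i), Gmin]
    abel
  have hbeta : Gmin X Wb S lam i *ᵥ β =
      ∑ j ∈ Finset.univ.erase i, ((Xb X j)ᵀ * V j) *ᵥ yb Y j := by
    rw [hβ, betaMin, Matrix.mulVec_mulVec, Matrix.mul_nonsing_inv _ hGmin, Matrix.one_mulVec]
  -- The full normal equations hold at `β` up to the contribution of the residual of subject `i`.
  have hnormal : G *ᵥ β + ((Xb X i)ᵀ * V i) *ᵥ (yb Y i - Xb X i *ᵥ β) =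
      (Xᵀ * Matrix.blockDiagonal' V) *ᵥ Y := by
    rw [moment_eq_sum, ← Finset.sum_erase_add _ _ (Finset.mem_univ i), ← hbeta, hsplit,
      Matrix.add_mulVec, Matrix.mulVec_sub, Matrix.mulVec_mulVec]
    abel
  have hfit : yb ((X * G⁻¹ * Xᵀ * Matrix.blockDiagonal' V) *ᵥ Y) i =
      Xb X i *ᵥ β + (Xb X i * G⁻¹ * ((Xb X i)ᵀ * V i)) *ᵥ (yb Y i - Xb X i *ᵥ β) := by
    have hblock : ∀ v : Fin p → ℝ, yb (X *ᵥ v) i = Xb X i *ᵥ v := fun _ => rfl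
    rw [Matrix.mul_assoc (X * G⁻¹), ← Matrix.mulVec_mulVec, ← hnormal, Matrix.mulVec_add,
      Matrix.mulVec_mulVec, Matrix.mul_assoc X, Matrix.nonsing_inv_mul _ hG, Matrix.mul_one,
      ← Matrix.mulVec_mulVec, ← Matrix.mulVec_add, hblock, Matrix.mulVec_add,
      Matrix.mulVec_mulVec, Matrix.mulVec_mulVec, Matrix.mul_assoc (Xb X i)]
  rw [hfit, Matrix.mul_assoc (X * G⁻¹), diagBlock_mul, Matrix.sub_mulVec, Matrix.one_mulVec]
  abel

end Lso6

/-- **Lemma (shortcut formula for leave-subject-out cross-validation).**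
If `I_{ii} − A_{ii}` is invertible for every subject `i`, then for each `i` the
leave-subject-`i`-out residual satisfies
`y_i − X_i β̂^{[-i]} = (I_{ii} − A_{ii})⁻¹ (y_i − ŷ_i)`, where `ŷ = A Y`, and consequently
`LsoCV(W,λ) = (1/n) ∑ᵢ (y_i − ŷ_i)ᵀ (I_{ii} − A_{ii})^{-T} (I_{ii} − A_{ii})⁻¹ (y_i − ŷ_i)`. -/
theorem statement_6 {n p m : ℕ} {d : Fin n → ℕ}
    (X : Matrix (Lso6.Idx d) (Fin p) ℝ)
    (Wb : (i : Fin n) → Matrix (Fin (d i)) (Fin (d i)) ℝ) (hWb : ∀ i, (Wb i).PosDef)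
    (hW : (Matrix.blockDiagonal' Wb).PosDef)
    (S : Fin m → Matrix (Fin p) (Fin p) ℝ) (hS : ∀ k, (S k).PosSemidef)
    (lam : Fin m → ℝ) (hlam : ∀ k, 0 ≤ lam k)
    (Y : Lso6.Idx d → ℝ)
    (hG : IsUnit (Xᵀ * (Matrix.blockDiagonal' Wb)⁻¹ * X + ∑ k, lam k • S k).det)
    (hGmin : ∀ i, IsUnit (Gmin X Wb S lam i).det)
    (hInv : ∀ i, IsUnit (1 - diagBlock (hatA X Wb S lam) i).det) :
    (∀ i : Fin n,
      yb Y i - (Xb X i).mulVec (betaMin X Wb S lam Y i) =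
        (1 - diagBlock (hatA X Wb S lam) i)⁻¹.mulVec
          (yb Y i - yb ((hatA X Wb S lam).mulVec Y) i))
    ∧ (1 / (n : ℝ)) * ∑ i, (yb Y i - (Xb X i).mulVec (betaMin X Wb S lam Y i)) ⬝ᵥ
          (yb Y i - (Xb X i).mulVec (betaMin X Wb S lam Y i)) =
      (1 / (n : ℝ)) * ∑ i,
        (yb Y i - yb ((hatA X Wb S lam).mulVec Y) i) ⬝ᵥ
          (((1 - diagBlock (hatA X Wb S lam) i)⁻¹ᵀ *
              (1 - diagBlock (hatA X Wb S lam) i)⁻¹).mulVec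
            (yb Y i - yb ((hatA X Wb S lam).mulVec Y) i)) := by
  have key : ∀ i : Fin n,
      yb Y i - (Xb X i).mulVec (betaMin X Wb S lam Y i) =
        (1 - diagBlock (hatA X Wb S lam) i)⁻¹.mulVec
          (yb Y i - yb ((hatA X Wb S lam).mulVec Y) i) := by
    intro i
    rw [← one_sub_diagBlock_mulVec_residual X Wb hWb S lam Y hG i (hGmin i),
      Matrix.mulVec_mulVec, Matrix.nonsing_inv_mul _ (hInv i), Matrix.one_mulVec]
  refine ⟨key, ?_⟩
  congr 1
  refine Finset.sum_congr rfl fun i _ => ?_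
  rw [key i, ← Matrix.mulVec_mulVec, Matrix.dotProduct_mulVec _ (_ᵀ), Matrix.vecMul_transpose]
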